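/- Assume M̄ ≥ 2D. Let s ∈ T, let τ(s) := inf{m > s : m ∈ T}, and suppose condition (D) holds at every index k ∈ {s−1, s, s+1, s+2, s+3} (so that τ(s) ≤ s+3). Then M_{τ(s)} ≤ max(a⁻¹ M_{s−1}, M̄). -/

import Mathlib

/-!
After a sign change at `s`, put `N = M_s = max (a⁻¹ M_{s-1}) M̄`. Until the next sign change the step
sizes are `N, N, a N`, and the first sign change after `s` divides the last step by `a` (with floor
`M̄ ≤ N`), so if it comes at `s+1`, `s+2` or `s+3` the new step size is at most `N`.

It cannot come later. At time `s` the estimate has overshot the signal by at most `(M_{s-1} + D) δ`,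
since it was on the other side at `s-1` (`ADM.sign_mul_nonneg`). With no sign change before `s+3` it
moves back by `(2 + a) N δ`, while the signal escapes by at most `3 D δ`. As `M_{s-1} ≤ a N` and
`4 D ≤ 2 M̄ ≤ 2 N`, the estimate has crossed or met the signal by time `s+3`, and either event flips
the sign (`ADM.Tmem_of_crossed`).
-/

noncomputable section

/-- Membership in the set `T = {k ≥ 1 : h_{k-1} h_k < 0}` of sign-change indices. -/
def Tmem (h : ℤ → ℝ) (k : ℕ) : Prop := 1 ≤ k ∧ h ((k : ℤ) - 1) * h (k : ℤ) < 0

/-- The modified adaptive delta modulation system: sequences `h_k` (binary symbols,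
indexed by `ℤ` so that `h (-1) = 1` makes sense), `y_k` (estimates at sample points)
and `M_k` (step sizes), driven by the sampled signal `x (k δ)`. -/
structure ADM (δ a Mbar M₀ y₀ : ℝ) (x : ℝ → ℝ) where
  h : ℤ → ℝ
  y : ℕ → ℝ
  M : ℕ → ℝ
  h_init : h (-1) = 1
  h_lt : ∀ k : ℕ, y k < x (k * δ) → h (k : ℤ) = 1
  h_gt : ∀ k : ℕ, x (k * δ) < y k → h (k : ℤ) = -1
  h_eq : ∀ k : ℕ, y k = x (k * δ) → h (k : ℤ) = - h ((k : ℤ) - 1)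
  y_zero : y 0 = y₀
  y_rec : ∀ k : ℕ, y (k + 1) = y k + h (k : ℤ) * M k * δ
  M_zero : M 0 = M₀
  M_pos : ∀ k : ℕ, 0 < M k
  M_rec_T : ∀ k : ℕ, Tmem h k → M k = max (a⁻¹ * M (k - 1)) Mbar
  M_rec_prev : ∀ k : ℕ, 1 ≤ k → ¬ Tmem h k → Tmem h (k - 1) → M k = M (k - 1)
  M_rec_grow : ∀ k : ℕ, 1 ≤ k → ¬ Tmem h k → ¬ Tmem h (k - 1) → M k = a * M (k - 1)

/-- Condition (D) at index `k`: `sup_{t ∈ [t_k, t_{k+1}]} |x(t) − x(t_k)| ≤ D δ`. -/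
def condD (δ D : ℝ) (x : ℝ → ℝ) (k : ℕ) : Prop :=
  ∀ t ∈ Set.Icc ((k : ℝ) * δ) (((k : ℝ) + 1) * δ), |x t - x ((k : ℝ) * δ)| ≤ D * δ

namespace ADM

variable {δ a Mbar M₀ y₀ : ℝ} {x : ℝ → ℝ} (S : ADM δ a Mbar M₀ y₀ x)

lemma h_eq_one_or (k : ℕ) : S.h k = 1 ∨ S.h k = -1 := by
  -- In the tie `y k = x (k δ)` the value is inherited, negated, from the previous index.
  induction k with
  | zero =>
    rcases lt_trichotomy (S.y 0) (x ((0 : ℕ) * δ)) with h | h | h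
    · exact Or.inl (S.h_lt 0 h)
    · right
      have := S.h_eq 0 h
      simpa [S.h_init] using this
    · exact Or.inr (S.h_gt 0 h)
  | succ k ih =>
    rcases lt_trichotomy (S.y (k + 1)) (x ((k + 1 : ℕ) * δ)) with h | h | h
    · exact Or.inl (S.h_lt _ h)
    · have := S.h_eq _ h
      rw [show ((k + 1 : ℕ) : ℤ) - 1 = k by push_cast; ring] at this
      rcases ih with h' | h' <;> rw [h'] at this
      · exact Or.inr this
      · left; simpa using this
    · exact Or.inr (S.h_gt _ h)

/-- The symbol `h k` points from the estimate towards the signal. -/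
lemma sign_mul_nonneg (k : ℕ) : 0 ≤ S.h k * (x (k * δ) - S.y k) := by
  rcases lt_trichotomy (S.y k) (x (k * δ)) with h | h | h
  · rw [S.h_lt k h]; linarith
  · simp [h]
  · rw [S.h_gt k h]; linarith

lemma Tmem_succ_iff (k : ℕ) : Tmem S.h (k + 1) ↔ S.h (k + 1 : ℕ) = -S.h k := by
  unfold Tmem
  rw [show ((k + 1 : ℕ) : ℤ) - 1 = k by push_cast; ring]
  rcases S.h_eq_one_or k with h | h <;> rcases S.h_eq_one_or (k + 1) with h' | h' <;>
    rw [h, h'] <;> norm_num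

lemma h_succ_of_not_Tmem {k : ℕ} (hk : ¬ Tmem S.h (k + 1)) : S.h (k + 1 : ℕ) = S.h k := by
  rw [S.Tmem_succ_iff] at hk
  rcases S.h_eq_one_or k with h | h <;> rcases S.h_eq_one_or (k + 1) with h' | h' <;>
    rw [h, h'] at hk ⊢ <;> norm_num at hk

/-- If the estimate has met or passed the signal in its direction of travel, the sign flips; the
tie-breaking rule for `h` covers the case of equality. -/
lemma Tmem_of_crossed (k : ℕ) (hc : S.h k * (x ((k + 1 : ℕ) * δ) - S.y (k + 1)) ≤ 0) :
    Tmem S.h (k + 1) := by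
  by_contra hT
  have hh := S.h_succ_of_not_Tmem hT
  have hn := S.sign_mul_nonneg (k + 1)
  rw [hh] at hn
  have h0 := le_antisymm hc hn
  have hne : S.h k ≠ 0 := by
    rcases S.h_eq_one_or k with h | h <;> rw [h] <;> norm_num
  have hxy := (mul_eq_zero.mp h0).resolve_left hne
  have := S.h_eq (k + 1) (by linarith)
  rw [show ((k + 1 : ℕ) : ℤ) - 1 = k by push_cast; ring] at this
  exact hT ((S.Tmem_succ_iff k).2 this)

end ADM

lemma condD.abs_step {δ D : ℝ} {x : ℝ → ℝ} {k : ℕ} (hδ : 0 < δ) (h : condD δ D x k) :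
    |x ((k + 1 : ℕ) * δ) - x (k * δ)| ≤ D * δ := by
  apply h
  push_cast
  constructor <;> nlinarith

/-- if `M̄ ≥ 2D`, `s ∈ T`, `τ(s) = inf{m > s : m ∈ T}`, and condition (D)
holds at every index `k ∈ {s−1, …, s+3}`, then `M_{τ(s)} ≤ max(a⁻¹ M_{s−1}, M̄)`. -/
theorem stmt6 (δ a Mbar M₀ y₀ D : ℝ) (x : ℝ → ℝ)
    (hδ : 0 < δ) (ha : 1 < a) (ha2 : a ≤ 2) (hMbar : 0 < Mbar) (hM₀ : 0 < M₀)
    (hD : 0 < D) (hMD : 2 * D ≤ Mbar)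
    (S : ADM δ a Mbar M₀ y₀ x)
    (s : ℕ) (hs : Tmem S.h s)
    (hDcond : ∀ k : ℕ, s - 1 ≤ k → k ≤ s + 3 → condD δ D x k)
    (τs : ℕ) (hτs : τs = sInf {m : ℕ | s < m ∧ Tmem S.h m}) :
    S.M τs ≤ max (a⁻¹ * S.M (s - 1)) Mbar := by
  obtain ⟨n, rfl⟩ : ∃ n, s = n + 1 := ⟨s - 1, by have := hs.1; omega⟩
  simp only [Nat.add_sub_cancel] at hDcond ⊢
  have ha0 : 0 < a := by linarith
  have hN := S.M_rec_T (n + 1) hs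
  simp only [Nat.add_sub_cancel] at hN
  rw [← hN]
  set N := S.M (n + 1) with hNdef
  have hNbar : Mbar ≤ N := hN ▸ le_max_right _ _
  have hMa : S.M n ≤ a * N := by
    have h1 : a⁻¹ * S.M n ≤ N := hN ▸ le_max_left _ _
    rwa [inv_mul_le_iff₀ ha0] at h1
  have hN0 : 0 < N := by linarith
  have hdiv : a⁻¹ * N ≤ N := by
    rw [inv_mul_le_iff₀ ha0]; nlinarith
  have key : ∀ m, n + 1 < m → Tmem S.h m →
      (∀ j, n + 1 < j → j < m → ¬ Tmem S.h j) → τs = m := by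
    intro m hm hT hmin
    rw [hτs]
    apply le_antisymm
    · exact Nat.sInf_le ⟨hm, hT⟩
    · refine le_csInf ⟨m, hm, hT⟩ ?_
      rintro j ⟨hj, hjT⟩
      by_contra hlt
      exact hmin j hj (by omega) hjT
  by_cases h2 : Tmem S.h (n + 2)
  · rw [key (n + 2) (by omega) h2 (by intros; omega), S.M_rec_T _ h2]
    exact max_le hdiv hNbar
  have hM2 : S.M (n + 2) = N := S.M_rec_prev (n + 2) (by omega) h2 hs
  by_cases h3 : Tmem S.h (n + 3)
  · rw [key (n + 3) (by omega) h3 (fun j hj hj' => by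
      obtain rfl : j = n + 2 := by omega
      exact h2), S.M_rec_T _ h3, show n + 3 - 1 = n + 2 by omega, hM2]
    exact max_le hdiv hNbar
  have hM3 : S.M (n + 3) = a * N := by
    rw [S.M_rec_grow (n + 3) (by omega) h3 h2, show n + 3 - 1 = n + 2 by omega, hM2]
  have h4 : Tmem S.h (n + 4) := by
    have e1 := (S.Tmem_succ_iff n).1 hs
    have e2 := S.h_succ_of_not_Tmem h2
    have e3 := S.h_succ_of_not_Tmem h3
    have y1 := S.y_rec n
    have y2 := S.y_rec (n + 1)
    have y3 := S.y_rec (n + 2)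
    have y4 := S.y_rec (n + 3)
    have d0 := abs_le.1 (condD.abs_step hδ (hDcond n (by omega) (by omega)))
    have d1 := abs_le.1 (condD.abs_step hδ (hDcond (n + 1) (by omega) (by omega)))
    have d2 := abs_le.1 (condD.abs_step hδ (hDcond (n + 2) (by omega) (by omega)))
    have d3 := abs_le.1 (condD.abs_step hδ (hDcond (n + 3) (by omega) (by omega)))
    have hn := S.sign_mul_nonneg n
    have hMaδ := mul_le_mul_of_nonneg_right hMa hδ.le
    have hDδ : 2 * (D * δ) ≤ N * δ := by nlinarith
    apply S.Tmem_of_crossed (n + 3)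
    simp only [Nat.add_assoc, Nat.reduceAdd] at *
    rw [e2, e1] at e3
    rw [e1] at e2
    rw [e1] at y2
    rw [e2, hM2] at y3
    rw [e3, hM3] at y4
    rw [e3]
    -- `h n = 1` means an overshoot upwards at `s`, `h n = -1` one downwards.
    rcases S.h_eq_one_or n with h | h <;> rw [h] at hn y1 y2 y3 y4 ⊢ <;>
      linarith [d0.1, d0.2, d1.1, d1.2, d2.1, d2.2, d3.1, d3.2]
  rw [key (n + 4) (by omega) h4 (fun j hj hj' => by
    obtain rfl | rfl : j = n + 2 ∨ j = n + 3 := by omega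
    · exact h2
    · exact h3), S.M_rec_T _ h4, show n + 4 - 1 = n + 3 by omega, hM3,
    inv_mul_cancel_left₀ ha0.ne']
  exact max_le le_rfl hNbar
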